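/- Let λ=(λ_1,...,λ_l) be a partition of length l and N'_{λ,1} = λ_2+⋯+λ_l − (l−1). Let μ=(μ_1,...,μ_{l'}) be a partition of length l' ≥ l such that μ_i = λ_i for 2 ≤ i ≤ l and μ_i = 1 for l < i ≤ l'. Then ∂_1^{N'_{λ,1}} s_μ(t) evaluated at t = [x_1]−[x_2] equals c_λ · s_{(μ_1,1^{l'−1})}([x_1]−[x_2]), where c_λ = (N'_{λ,1}! / Π_{i=1}^{l−1}(w_i−1)!) · Π_{1≤i<j≤l−1}(w_j−w_i) with (w_l,...,w_1) = (λ_1,...,λ_l)+(l−1,...,1,0). -/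

import Mathlib

open MvPolynomial

/-- The polynomial `p_n(t)` defined by `exp(Σ_{n≥1} t_n k^n) = Σ_{n≥0} p_n(t) k^n`,
as a polynomial in the variables `t_1, t_2, ...` (variable `X n` stands for `t_n`). -/
noncomputable def pS (n : ℕ) : MvPolynomial ℕ ℚ :=
  ∑ m ∈ Finset.range (n + 1), (Nat.factorial m : ℚ)⁻¹ •
    ∑ c ∈ Finset.univ.filter
        (fun c : Fin m → Fin (n + 1) =>
          (∑ j, ((c j : ℕ))) = n ∧ ∀ j, 1 ≤ (c j : ℕ)),
      ∏ j, X ((c j : ℕ))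

/-- `p_n` for `n : ℤ`, with `p_n = 0` for `n < 0`. -/
noncomputable def pz (n : ℤ) : MvPolynomial ℕ ℚ :=
  if 0 ≤ n then pS n.toNat else 0

/-- The Schur function `s_λ(t) = det(p_{λ_i - i + j})_{1 ≤ i,j ≤ l}` (here `0`-indexed). -/
noncomputable def schur {l : ℕ} (lam : Fin l → ℕ) : MvPolynomial ℕ ℚ :=
  Matrix.det (Matrix.of fun a b : Fin l =>
    pz ((lam a : ℤ) - ((a : ℕ) : ℤ) + ((b : ℕ) : ℤ)))

/-- Substitution `t_n ↦ (x_1^n + ⋯ + x_k^n)/n`, i.e. `t = [x_1] + ⋯ + [x_k]`. -/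
noncomputable def toPowerSums (k : ℕ) (f : MvPolynomial ℕ ℚ) : MvPolynomial (Fin k) ℚ :=
  aeval (fun n : ℕ => (n : ℚ)⁻¹ • ∑ i : Fin k, X i ^ n) f

/-- Iterated partial derivative `∂_{i_1} ⋯ ∂_{i_r}` for a list `L = [i_1, ..., i_r]`. -/
noncomputable def derivs (L : List ℕ) (f : MvPolynomial ℕ ℚ) : MvPolynomial ℕ ℚ :=
  L.foldr (fun i g => pderiv i g) f

/-- The entries of a partition `λ` padded by zeros (`0`-indexed). -/
def pad {l : ℕ} (lam : Fin l → ℕ) (a : ℕ) : ℕ := if h : a < l then lam ⟨a, h⟩ else 0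

/-- Substitution `t_n ↦ (x_1^n - x_2^n)/n`, i.e. `t = [x_1] - [x_2]`
(here `x_1 = X 0`, `x_2 = X 1`). -/
noncomputable def toDiff (f : MvPolynomial ℕ ℚ) : MvPolynomial (Fin 2) ℚ :=
  aeval (fun n : ℕ => (n : ℚ)⁻¹ • (X 0 ^ n - X 1 ^ n)) f

/-!
At `t = [x] - [y] + (u, 0, 0, …)` the series `exp (Σ tₙ kⁿ)` becomes
`(1 - y k) / (1 - x k) · e^{uk}`, so the values `F z` of `p_z` there satisfy
`F z - x F (z - 1) = u^z / z! - y u^(z - 1) / (z - 1)!`.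
Subtracting `x` times the previous column in the determinant for `s_μ` therefore leaves only the
first column involving `F`, and every other entry is a divided power of `u` minus `y` times the
preceding one.

The derivative `∂₁^N` at `u = 0` is `N!` times the coefficient of `u^N`. Indexing rows and
columns from `0`, put `m_a = μ_a - a`, and let `N` be the sum of `μ_a - 1` over `a ≥ 1`. Taking
powers of `u` out of rows and columns extracts exactly `u^N` and multiplies the first-column
entry in row `a` by `u^(m_0 - m_a)`, which vanishes at `u = 0` unless `a = 0`. What remains is
`p_{μ_0}([x] - [y]) (-y)^(l' - 1)`, which is the hook Schur function, times Aitken's determinant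
`det (1 / (m_a + j)!)` over `a ≥ 1` and `j ≥ 0`; the latter reduces to a Vandermonde determinant
because `w! / (w - j)!` is a monic polynomial of degree `j` in `w`.
-/

section Exponential

open scoped PowerSeries

theorem coeff_mk_pow {S : Type*} [CommSemiring S] {g : ℕ → S} (hg : g 0 = 0) (n m : ℕ) :
    PowerSeries.coeff n (PowerSeries.mk g ^ m) =
      ∑ c : Fin m → Fin (n + 1) with (∑ j, (c j : ℕ)) = n ∧ ∀ j, 1 ≤ (c j : ℕ),
        ∏ j, g (c j) := by
  rw [← Fin.prod_const, PowerSeries.coeff_prod]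
  simp only [PowerSeries.coeff_mk]
  symm
  refine Finset.sum_bij_ne_zero (fun c _ _ => Finsupp.equivFunOnFinite.symm fun j => (c j : ℕ))
    ?_ ?_ ?_ ?_
  · intro c hc _
    simpa using (Finset.mem_filter.mp hc).2.1
  · intro c _ _ c' _ _ h
    ext j
    simpa using DFunLike.congr_fun h j
  · intro f hf hne
    have hsum : ∑ j, f j = n := by simpa using hf
    have hlt (j : Fin m) : f j < n + 1 :=
      Nat.lt_succ_of_le (hsum ▸ Finset.single_le_sum_of_canonicallyOrdered (Finset.mem_univ j))
    have hpos (j : Fin m) : 1 ≤ f j :=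
      Nat.one_le_iff_ne_zero.mpr fun h =>
        hne (Finset.prod_eq_zero (Finset.mem_univ j) (by rw [h, hg]))
    exact ⟨fun j => ⟨f j, hlt j⟩, by simpa using ⟨hsum, hpos⟩, hne, by ext; rfl⟩
  · exact fun _ _ _ => rfl

variable {S : Type*} [CommRing S]

theorem coeff_succ_one_sub_C_mul_X_mul (x : S) (F : S⟦X⟧) (n : ℕ) :
    PowerSeries.coeff (n + 1) ((1 - PowerSeries.C x * PowerSeries.X) * F) =
      PowerSeries.coeff (n + 1) F - x * PowerSeries.coeff n F := by
  rw [sub_mul, one_mul, mul_assoc, map_sub, PowerSeries.coeff_C_mul, PowerSeries.coeff_succ_X_mul]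

variable [Algebra ℚ S]

theorem coeff_exp_subst_mk {g : ℕ → S} (hg : g 0 = 0) (n : ℕ) :
    PowerSeries.coeff n ((PowerSeries.exp S).subst (PowerSeries.mk g)) = aeval g (pS n) := by
  have hconst : PowerSeries.constantCoeff (PowerSeries.mk g) = 0 := by simpa using hg
  have hvanish {m : ℕ} (hm : n < m) : PowerSeries.coeff n (PowerSeries.mk g ^ m) = 0 :=
    PowerSeries.X_pow_dvd_iff.mp (pow_dvd_pow_of_dvd (PowerSeries.X_dvd_iff.mpr hconst) m) n hm
  rw [PowerSeries.coeff_subst' (.of_constantCoeff_zero' hconst),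
    finsum_eq_sum_of_support_subset (s := Finset.range (n + 1))]
  · simp only [pS, map_sum, map_smul, map_prod, aeval_X, ← coeff_mk_pow hg, PowerSeries.coeff_exp,
      one_div, algebraMap_smul]
  · intro m hm
    by_contra h
    exact hm (by simp only [hvanish (by simpa using h), smul_zero])

theorem derivative_exp_subst {f : S⟦X⟧} (hf : PowerSeries.constantCoeff f = 0) :
    d⁄dX S ((PowerSeries.exp S).subst f) = (PowerSeries.exp S).subst f * d⁄dX S f := by
  rw [PowerSeries.derivative_subst (.of_constantCoeff_zero' hf), PowerSeries.derivative_exp]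

theorem constantCoeff_exp_subst {f : S⟦X⟧} (hf : PowerSeries.constantCoeff f = 0) :
    PowerSeries.constantCoeff ((PowerSeries.exp S).subst f) = 1 := by
  have hsub := PowerSeries.HasSubst.of_constantCoeff_zero' hf
  have hone : (1 : S⟦X⟧).subst f = 1 := by
    rw [← PowerSeries.coe_substAlgHom hsub, map_one]
  have hzero : PowerSeries.constantCoeff ((PowerSeries.exp S - 1).subst f) = 0 :=
    PowerSeries.constantCoeff_subst_eq_zero hf _ (by simp)
  rwa [PowerSeries.subst_sub hsub, hone, map_sub, map_one, sub_eq_zero] at hzero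

theorem eq_exp_subst_of_derivative_eq {F f : S⟦X⟧} (hf : PowerSeries.constantCoeff f = 0)
    (hF : d⁄dX S F = F * d⁄dX S f) (hF₀ : PowerSeries.constantCoeff F = 1) :
    F = (PowerSeries.exp S).subst f := by
  have : IsAddTorsionFree S := .of_module_rat S
  have hnegf : PowerSeries.constantCoeff (-f) = 0 := by rw [map_neg, hf, neg_zero]
  set E := (PowerSeries.exp S).subst (-f)
  have hinv {G : S⟦X⟧} (hG : d⁄dX S G = G * d⁄dX S f) (hG₀ : PowerSeries.constantCoeff G = 1) :
      G * E = 1 := by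
    refine PowerSeries.derivative.ext ?_ ?_
    · rw [Derivation.leibniz, hG, derivative_exp_subst hnegf, map_neg, smul_eq_mul, smul_eq_mul,
        Derivation.map_one_eq_zero]
      ring
    · rw [map_mul, hG₀, constantCoeff_exp_subst hnegf, map_one, one_mul]
  exact (IsUnit.of_mul_eq_one_right _ (hinv hF hF₀)).mul_left_injective <|
    (hinv hF hF₀).trans (hinv (derivative_exp_subst hf) (constantCoeff_exp_subst hf)).symm

theorem exp_subst_add {f g : S⟦X⟧} (hf : PowerSeries.constantCoeff f = 0)
    (hg : PowerSeries.constantCoeff g = 0) :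
    (PowerSeries.exp S).subst (f + g) =
      (PowerSeries.exp S).subst f * (PowerSeries.exp S).subst g := by
  refine (eq_exp_subst_of_derivative_eq (by rw [map_add, hf, hg, add_zero]) ?_ ?_).symm
  · rw [Derivation.leibniz, derivative_exp_subst hf, derivative_exp_subst hg, map_add,
      smul_eq_mul, smul_eq_mul]
    ring
  · rw [map_mul, constantCoeff_exp_subst hf, constantCoeff_exp_subst hg, one_mul]

/-- The point `[x] = (x, x²/2, x³/3, …)`, indexed from `0`; the entry at `0` is `0` because
`(0 : ℚ)⁻¹ = 0`. -/
noncomputable def bracket (x : S) (n : ℕ) : S := (n : ℚ)⁻¹ • x ^ n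

theorem bracket_zero (x : S) : bracket x 0 = 0 := by simp [bracket]

theorem constantCoeff_mk_bracket (x : S) :
    PowerSeries.constantCoeff (PowerSeries.mk (bracket x)) = 0 := by
  simpa using bracket_zero x

theorem one_sub_mul_derivative_mk_bracket (x : S) :
    (1 - PowerSeries.C x * PowerSeries.X) * d⁄dX S (PowerSeries.mk (bracket x)) =
      PowerSeries.C x := by
  have hcoeff (n : ℕ) : PowerSeries.coeff n (d⁄dX S (PowerSeries.mk (bracket x))) =
      x ^ (n + 1) := by
    rw [PowerSeries.coeff_derivative, PowerSeries.coeff_mk, bracket, mul_comm, ← Nat.cast_succ,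
      ← nsmul_eq_mul, ← Nat.cast_smul_eq_nsmul ℚ, smul_smul,
      mul_inv_cancel₀ (Nat.cast_ne_zero.mpr n.succ_ne_zero), one_smul]
  ext n
  cases n with
  | zero => rw [sub_mul, one_mul, mul_assoc, map_sub, hcoeff]; simp
  | succ n =>
    rw [coeff_succ_one_sub_C_mul_X_mul, hcoeff, hcoeff, pow_succ' x (n + 1), sub_self,
      PowerSeries.coeff_C, if_neg n.succ_ne_zero]

theorem one_sub_mul_exp_subst_bracket (x : S) :
    (1 - PowerSeries.C x * PowerSeries.X) *
      (PowerSeries.exp S).subst (PowerSeries.mk (bracket x)) = 1 := by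
  have : IsAddTorsionFree S := .of_module_rat S
  refine PowerSeries.derivative.ext ?_ ?_
  · have hlin : d⁄dX S (1 - PowerSeries.C x * PowerSeries.X) = -PowerSeries.C x := by simp
    rw [Derivation.leibniz, hlin, derivative_exp_subst (constantCoeff_mk_bracket x),
      Derivation.map_one_eq_zero, smul_eq_mul, smul_eq_mul]
    linear_combination (PowerSeries.exp S).subst (PowerSeries.mk (bracket x)) *
      one_sub_mul_derivative_mk_bracket x
  · simp [constantCoeff_exp_subst (constantCoeff_mk_bracket x)]

-- The shift is written `C u * X` because `u • X` is ambiguous for `S = A[X]`, where `S⟦X⟧` is also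
-- an `A[X]`-algebra with the polynomial variable acting as the power series variable.
theorem one_sub_mul_exp_subst_bracket_sub (x y u : S) :
    (1 - PowerSeries.C x * PowerSeries.X) * (PowerSeries.exp S).subst
        (PowerSeries.mk (bracket x) - PowerSeries.mk (bracket y) +
          PowerSeries.C u * PowerSeries.X) =
      (1 - PowerSeries.C y * PowerSeries.X) * PowerSeries.rescale u (PowerSeries.exp S) := by
  have hx := constantCoeff_mk_bracket x
  have hy := constantCoeff_mk_bracket y
  have hu : PowerSeries.constantCoeff (PowerSeries.C u * PowerSeries.X) = 0 := by simp
  have hxyu : PowerSeries.constantCoeff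
      (PowerSeries.mk (bracket x) - PowerSeries.mk (bracket y) +
        PowerSeries.C u * PowerSeries.X) = 0 := by
    simp [hx, hy]
  have hsplit := exp_subst_add hxyu hy
  rw [show PowerSeries.mk (bracket x) - PowerSeries.mk (bracket y) +
        PowerSeries.C u * PowerSeries.X + PowerSeries.mk (bracket y) =
      PowerSeries.mk (bracket x) + PowerSeries.C u * PowerSeries.X by ring,
    exp_subst_add hx hu, ← PowerSeries.smul_eq_C_mul PowerSeries.X u,
    ← PowerSeries.rescale_eq_subst, PowerSeries.smul_eq_C_mul] at hsplit
  linear_combination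
    (1 - PowerSeries.C y * PowerSeries.X) * PowerSeries.rescale u (PowerSeries.exp S) *
        one_sub_mul_exp_subst_bracket x
      - (1 - PowerSeries.C x * PowerSeries.X) * (1 - PowerSeries.C y * PowerSeries.X) * hsplit
      - (1 - PowerSeries.C x * PowerSeries.X) * (PowerSeries.exp S).subst
        (PowerSeries.mk (bracket x) - PowerSeries.mk (bracket y) +
          PowerSeries.C u * PowerSeries.X) *
          one_sub_mul_exp_subst_bracket y

end Exponential

section Shift

open scoped Polynomial

variable {σ R A : Type*} [CommSemiring R] [CommSemiring A] [Algebra R A] [DecidableEq σ]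

/-- The substitution `f ↦ f(v + u eᵢ)`, as a polynomial in the increment `u` of the `i`-th
variable; its coefficients are the divided `i`-th partial derivatives of `f` at `v`. -/
noncomputable def shiftHom (i : σ) (v : σ → A) : MvPolynomial σ R →ₐ[R] A[X] :=
  aeval (Polynomial.C ∘ v + Pi.single i Polynomial.X)

theorem derivative_shiftHom (i : σ) (v : σ → A) (f : MvPolynomial σ R) :
    Polynomial.derivative (shiftHom i v f) = shiftHom i v (pderiv i f) := by
  induction f using MvPolynomial.induction_on with
  | C a =>
    rw [pderiv_C, map_zero, ← algebraMap_eq, AlgHom.commutes,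
      IsScalarTower.algebraMap_apply R A, Polynomial.algebraMap_eq, Polynomial.derivative_C]
  | add p q hp hq => simp only [map_add, hp, hq]
  | mul_X p n hp =>
    have hX : Polynomial.derivative (shiftHom i v (X n : MvPolynomial σ R)) =
        shiftHom i v (pderiv i (X n : MvPolynomial σ R)) := by
      rcases eq_or_ne n i with rfl | h
      · simp [shiftHom]
      · simp [shiftHom, h, pderiv_X_of_ne h]
    simp only [map_mul, Polynomial.derivative_mul, hp, hX, Derivation.leibniz, smul_eq_mul, map_add]
    ring

theorem coeff_zero_shiftHom (i : σ) (v : σ → A) (f : MvPolynomial σ R) :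
    (shiftHom i v f).coeff 0 = aeval v f := by
  have hcomp : ((Polynomial.aeval (0 : A)).restrictScalars R).comp (shiftHom i v) =
      aeval (R := R) v := by
    ext n
    rcases eq_or_ne n i with rfl | h <;> simp [shiftHom, *]
  rw [Polynomial.coeff_zero_eq_aeval_zero, ← hcomp]
  rfl

theorem aeval_iterate_pderiv (i : σ) (v : σ → A) (N : ℕ) (f : MvPolynomial σ R) :
    aeval v ((pderiv i)^[N] f) = N.factorial • (shiftHom i v f).coeff N := by
  have hiter : shiftHom i v ((pderiv i)^[N] f) = Polynomial.derivative^[N] (shiftHom i v f) :=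
    ((Function.Semiconj.iterate_right fun g => (derivative_shiftHom i v g).symm) N).eq f
  rw [← coeff_zero_shiftHom i, hiter, Polynomial.coeff_iterate_derivative, zero_add,
    Nat.descFactorial_self]

end Shift

theorem derivs_replicate (N i : ℕ) (f : MvPolynomial ℕ ℚ) :
    derivs (List.replicate N i) f = (pderiv i)^[N] f := by
  induction N with
  | zero => rfl
  | succ N ih => rw [Function.iterate_succ_apply', ← ih]; rfl

section DividedPower

open scoped Polynomial

/-- `1 / z!`, with the convention that it vanishes for negative `z`. -/
noncomputable def invFactorial (z : ℤ) : ℚ :=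
  if 0 ≤ z then (z.toNat.factorial : ℚ)⁻¹ else 0

theorem invFactorial_natCast (n : ℕ) : invFactorial n = (n.factorial : ℚ)⁻¹ := by
  simp [invFactorial]

theorem invFactorial_of_neg {z : ℤ} (hz : z < 0) : invFactorial z = 0 :=
  if_neg hz.not_ge

theorem pz_natCast (n : ℕ) : pz n = pS n := by simp [pz]

theorem pz_of_neg {z : ℤ} (hz : z < 0) : pz z = 0 := if_neg hz.not_ge

theorem pS_zero : pS 0 = 1 := by simp [pS]

/-- The divided power `u^z / z!` in `A[u]`, with the convention that it vanishes for negative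
`z`. -/
noncomputable def dividedPower (A : Type*) [CommRing A] [Algebra ℚ A] (z : ℤ) : A[X] :=
  invFactorial z • Polynomial.X ^ z.toNat

variable {A : Type*} [CommRing A] [Algebra ℚ A]

theorem dividedPower_of_neg {z : ℤ} (hz : z < 0) : dividedPower A z = 0 := by
  rw [dividedPower, invFactorial_of_neg hz, zero_smul]

theorem coeff_rescale_X_exp (n : ℕ) :
    PowerSeries.coeff n (PowerSeries.rescale Polynomial.X (PowerSeries.exp A[X])) =
      dividedPower A n := by
  rw [PowerSeries.coeff_rescale, PowerSeries.coeff_exp, dividedPower, invFactorial_natCast,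
    Int.toNat_natCast, one_div, mul_comm, Algebra.smul_def]

theorem shiftHom_pS (x y : A) (n : ℕ) :
    shiftHom 1 (bracket x - bracket y) (pS n) =
      PowerSeries.coeff n ((PowerSeries.exp A[X]).subst
        (PowerSeries.mk (bracket (Polynomial.C x)) - PowerSeries.mk (bracket (Polynomial.C y)) +
          PowerSeries.C Polynomial.X * PowerSeries.X)) := by
  have hseries : PowerSeries.mk (bracket (Polynomial.C x)) -
      PowerSeries.mk (bracket (Polynomial.C y)) + PowerSeries.C Polynomial.X * PowerSeries.X =
      PowerSeries.mk
        (Polynomial.C ∘ (bracket x - bracket y) + (Pi.single 1 Polynomial.X : ℕ → A[X])) := by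
    ext1 n
    have hC (z : A) : bracket (Polynomial.C z) n = Polynomial.C (bracket z n) := by
      simp [bracket, ← Polynomial.smul_C]
    rw [map_add, map_sub, PowerSeries.coeff_mk, PowerSeries.coeff_mk, PowerSeries.coeff_mk,
      PowerSeries.coeff_C_mul, PowerSeries.coeff_X, hC, hC, Pi.add_apply,
      Function.comp_apply, Pi.sub_apply, map_sub, mul_ite, mul_one, mul_zero, Pi.single_apply]
  rw [hseries, coeff_exp_subst_mk (by simp [bracket_zero]), shiftHom]

theorem shiftHom_pz (x y : A) (z : ℤ) :
    shiftHom 1 (bracket x - bracket y) (pz z) =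
      dividedPower A z - Polynomial.C y * dividedPower A (z - 1) +
        Polynomial.C x * shiftHom 1 (bracket x - bracket y) (pz (z - 1)) := by
  rcases lt_trichotomy z 0 with hz | rfl | hz
  · simp [dividedPower_of_neg hz, dividedPower_of_neg (show z - 1 < 0 by omega), pz_of_neg hz,
      pz_of_neg (show z - 1 < 0 by omega)]
  · rw [dividedPower_of_neg (show (0 : ℤ) - 1 < 0 by omega),
      pz_of_neg (show (0 : ℤ) - 1 < 0 by omega), show pz 0 = pS 0 from pz_natCast 0, pS_zero]
    simp [dividedPower, invFactorial]
  · obtain ⟨n, rfl⟩ : ∃ n : ℕ, z = (n + 1 : ℕ) := ⟨(z - 1).toNat, by omega⟩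
    rw [show ((n + 1 : ℕ) : ℤ) - 1 = n by omega, pz_natCast, pz_natCast, shiftHom_pS,
      shiftHom_pS, ← sub_eq_iff_eq_add]
    have hcoeff := congrArg (PowerSeries.coeff (n + 1)) (one_sub_mul_exp_subst_bracket_sub
      (Polynomial.C x) (Polynomial.C y) Polynomial.X)
    rwa [coeff_succ_one_sub_C_mul_X_mul, coeff_succ_one_sub_C_mul_X_mul, coeff_rescale_X_exp,
      coeff_rescale_X_exp] at hcoeff

end DividedPower

section LowestCoefficient

open scoped Polynomial
open LaurentPolynomial (T T_add)

theorem prod_T {ι R : Type*} [CommRing R] (t : Finset ι) (r : ι → ℤ) :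
    ∏ i ∈ t, (T (r i) : LaurentPolynomial R) = T (∑ i ∈ t, r i) := by
  classical
  induction t using Finset.induction_on with
  | empty => simp
  | insert i t hi ih => rw [Finset.prod_insert hi, Finset.sum_insert hi, ih, T_add]

theorem det_eq_X_pow_mul_det {ι R : Type*} [Fintype ι] [DecidableEq ι] [CommRing R]
    {A B : Matrix ι ι R[X]} {r s : ι → ℤ} {N : ℕ}
    (hAB : ∀ i j, (A i j).toLaurent = T (r i + s j) * (B i j).toLaurent)
    (hN : ∑ i, r i + ∑ j, s j = N) : A.det = Polynomial.X ^ N * B.det := by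
  have hA : Polynomial.toLaurent.mapMatrix A = Matrix.of fun i j => T (r i) *
      Matrix.of (fun i j => T (s j) * Polynomial.toLaurent.mapMatrix B i j) i j := by
    ext1 i j
    rw [RingHom.mapMatrix_apply, Matrix.map_apply, hAB, T_add, mul_assoc]
    rfl
  apply Polynomial.toLaurent_injective
  rw [RingHom.map_det, hA, Matrix.det_mul_column, Matrix.det_mul_row, prod_T, prod_T, ← mul_assoc,
    ← T_add, hN, ← RingHom.map_det, map_mul, Polynomial.toLaurent_X_pow]

variable {A : Type*} [CommRing A] [Algebra ℚ A]

theorem toLaurent_dividedPower (z : ℤ) :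
    (dividedPower A z).toLaurent =
      T z * LaurentPolynomial.C (algebraMap ℚ A (invFactorial z)) := by
  rcases lt_or_ge z 0 with hz | hz
  · rw [dividedPower_of_neg hz, invFactorial_of_neg hz]
    simp
  · rw [dividedPower, ← algebraMap_smul A, Polynomial.smul_eq_C_mul, map_mul,
      Polynomial.toLaurent_C, Polynomial.toLaurent_X_pow, Int.toNat_of_nonneg hz, mul_comm]

variable {d : ℕ} (x y : A) (m : Fin (d + 1) → ℤ)

theorem det_shiftHom_pz :
    (Matrix.of fun a b : Fin (d + 1) => shiftHom 1 (bracket x - bracket y) (pz (m a + b))).det =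
      (Matrix.of fun a => Matrix.vecCons (shiftHom 1 (bracket x - bracket y) (pz (m a)))
        fun j : Fin d => dividedPower A (m a + j + 1) -
          Polynomial.C y * dividedPower A (m a + j)).det := by
  refine Matrix.det_eq_of_forall_col_eq_smul_add_pred (fun _ => Polynomial.C x) ?_ ?_
  · intro a
    simp
  · intro a j
    have h := shiftHom_pz x y (m a + j + 1)
    rw [add_sub_cancel_right] at h
    simpa [add_assoc] using h

/-- The column-reduced matrix of `det_shiftHom_pz` with the power `u ^ (m a + s b)` taken out of its
`(a, b)` entry, where `s 0 = -m 0` and `s (j + 1) = j`. Its entries are genuine polynomials as long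
as `m 0` is the largest of the `m a`, and its value at `u = 0` gives the lowest-order term of the
determinant. -/
noncomputable def lowestMatrix : Matrix (Fin (d + 1)) (Fin (d + 1)) A[X] :=
  Matrix.of fun a => Matrix.vecCons
    (Polynomial.X ^ (m 0 - m a).toNat * shiftHom 1 (bracket x - bracket y) (pz (m a)))
    fun j : Fin d => Polynomial.C (algebraMap ℚ A (invFactorial (m a + j + 1))) * Polynomial.X -
      Polynomial.C (y * algebraMap ℚ A (invFactorial (m a + j)))

variable {x y m}

theorem lowestMatrix_zero (a : Fin (d + 1)) :
    lowestMatrix x y m a 0 = Polynomial.X ^ (m 0 - m a).toNat *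
      shiftHom 1 (bracket x - bracket y) (pz (m a)) :=
  rfl

theorem lowestMatrix_succ (a : Fin (d + 1)) (j : Fin d) :
    lowestMatrix x y m a j.succ =
      Polynomial.C (algebraMap ℚ A (invFactorial (m a + j + 1))) * Polynomial.X -
        Polynomial.C (y * algebraMap ℚ A (invFactorial (m a + j))) :=
  rfl

variable (x y)

theorem det_shiftHom_pz_eq_X_pow_mul (hm : ∀ a : Fin d, m a.succ < m 0) {N : ℕ}
    (hN : ∑ a : Fin d, (m a.succ + a) = N) :
    (Matrix.of fun a b : Fin (d + 1) => shiftHom 1 (bracket x - bracket y) (pz (m a + b))).det =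
      Polynomial.X ^ N * (lowestMatrix x y m).det := by
  rw [det_shiftHom_pz]
  refine det_eq_X_pow_mul_det (r := m) (s := Matrix.vecCons (-m 0) fun j => j) (fun a b => ?_) ?_
  · cases b using Fin.cases with
    | zero =>
      have hle : m a ≤ m 0 := Fin.cases le_rfl (fun a => (hm a).le) a
      rw [lowestMatrix_zero, Matrix.of_apply, Matrix.cons_val_zero, Matrix.cons_val_zero, map_mul,
        Polynomial.toLaurent_X_pow, ← mul_assoc, ← T_add, Int.toNat_of_nonneg (sub_nonneg.mpr hle),
        show m a + -m 0 + (m 0 - m a) = 0 by ring, LaurentPolynomial.T_zero, one_mul]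
    | succ j =>
      simp only [lowestMatrix_succ, Matrix.of_apply, Matrix.cons_val_succ, map_sub, map_mul,
        toLaurent_dividedPower, Polynomial.toLaurent_C, Polynomial.toLaurent_X, T_add]
      ring
  · rw [Fin.sum_univ_succ, Fin.sum_univ_succ, ← hN, Finset.sum_add_distrib]
    simp only [Matrix.cons_val_zero, Matrix.cons_val_succ]
    ring

theorem coeff_zero_det_lowestMatrix (hm : ∀ a : Fin d, m a.succ < m 0) :
    (lowestMatrix x y m).det.coeff 0 =
      aeval (bracket x - bracket y) (pz (m 0)) * ((-y) ^ d * algebraMap ℚ A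
        (Matrix.of fun i j : Fin d => invFactorial (m i.succ + j)).det) := by
  set L := Polynomial.constantCoeff.mapMatrix (lowestMatrix x y m) with hL
  have hzero : L 0 0 = aeval (bracket x - bracket y) (pz (m 0)) := by
    rw [hL, RingHom.mapMatrix_apply, Matrix.map_apply, lowestMatrix_zero, sub_self, Int.toNat_zero,
      pow_zero, one_mul, Polynomial.constantCoeff_apply, coeff_zero_shiftHom]
  have hcol (a : Fin d) : L a.succ 0 = 0 := by
    have hpos : (m 0 - m a.succ).toNat ≠ 0 := by have := hm a; omega
    rw [hL, RingHom.mapMatrix_apply, Matrix.map_apply, lowestMatrix_zero, map_mul, map_pow,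
      Polynomial.constantCoeff_apply, Polynomial.coeff_X_zero, zero_pow hpos, zero_mul]
  have hminor : L.submatrix (Fin.succAbove 0) Fin.succ = (-y) • (algebraMap ℚ A).mapMatrix
        (Matrix.of fun i j : Fin d => invFactorial (m i.succ + j)) := by
    ext i j
    rw [hL, Matrix.submatrix_apply, RingHom.mapMatrix_apply, Matrix.map_apply, lowestMatrix_succ,
      map_sub, map_mul, Polynomial.constantCoeff_apply, Polynomial.constantCoeff_apply,
      Polynomial.constantCoeff_apply, Polynomial.coeff_X_zero, mul_zero, zero_sub,
      Polynomial.coeff_C_zero, ← neg_mul]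
    rfl
  rw [← Polynomial.constantCoeff_apply, RingHom.map_det, ← hL, Matrix.det_succ_column_zero,
    Fin.sum_univ_succ, hminor, Matrix.det_smul, ← RingHom.map_det, hzero, Fintype.card_fin,
    Finset.sum_eq_zero fun a _ => by rw [hcol, mul_zero, zero_mul]]
  simp

end LowestCoefficient

section InvFactorialDet

theorem prod_fin_prod_Ioi {M : Type*} [CommMonoid M] (d : ℕ) (f : ℕ → ℕ → M) :
    ∏ i : Fin d, ∏ j ∈ Finset.Ioi i, f i j =
      ∏ j ∈ Finset.range d, ∏ i ∈ Finset.range j, f i j := by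
  rw [Finset.prod_comm' (t' := Finset.univ) (s' := Finset.Iio) (by simp),
    ← Fin.prod_univ_eq_prod_range fun j => ∏ i ∈ Finset.range j, f i j]
  refine Finset.prod_congr rfl fun j _ => ?_
  rw [← Nat.Iio_eq_range, ← Fin.map_valEmbedding_Iio, Finset.prod_map]
  rfl

theorem invFactorial_sub (w j : ℕ) :
    invFactorial (w - j) = (w.factorial : ℚ)⁻¹ * w.descFactorial j := by
  rcases lt_or_ge w j with h | h
  · rw [invFactorial_of_neg (by omega), Nat.descFactorial_of_lt h, Nat.cast_zero, mul_zero]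
  · rw [← Nat.cast_sub h, invFactorial_natCast, ← Nat.factorial_mul_descFactorial h, Nat.cast_mul,
      mul_inv, mul_assoc, inv_mul_cancel₀, mul_one]
    exact Nat.cast_ne_zero.mpr (Nat.descFactorial_pos.mpr h).ne'

theorem det_invFactorial_sub {d : ℕ} (w : ℕ → ℕ) :
    (Matrix.of fun i j : Fin d => invFactorial (w i - j)).det =
      (∏ i ∈ Finset.range d, ((w i).factorial : ℚ))⁻¹ *
        ∏ j ∈ Finset.range d, ∏ i ∈ Finset.range j, ((w j : ℚ) - w i) := by
  have hentry : (Matrix.of fun i j : Fin d => invFactorial (w i - j)) =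
      Matrix.of fun i j : Fin d => ((w i).factorial : ℚ)⁻¹ *
        Matrix.of (fun i j : Fin d => (descPochhammer ℚ j).eval (w i : ℚ)) i j := by
    ext i j
    simp only [Matrix.of_apply, invFactorial_sub, descPochhammer_eval_eq_descFactorial]
  rw [hentry, Matrix.det_mul_column, ← Matrix.det_eval_matrixOfPolynomials_eq_det_vandermonde
    (fun i : Fin d => (w i : ℚ)) (fun j : Fin d => descPochhammer ℚ j)
    (fun i => descPochhammer_natDegree ℚ i) (fun i => monic_descPochhammer ℚ i),
    Matrix.det_vandermonde, prod_fin_prod_Ioi d fun i j => (w j : ℚ) - w i,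
    Finset.prod_inv_distrib, Fin.prod_univ_eq_prod_range fun i => ((w i).factorial : ℚ)]

/-- Aitken's determinant `det(1 / (νᵢ - i + j)!)` of order `d`, with rows and columns indexed from
`0`; times `|ν|!` it counts the standard tableaux of shape `ν`. -/
noncomputable def invFactorialDet (d : ℕ) (ν : ℕ → ℕ) : ℚ :=
  (Matrix.of fun i j : Fin d => invFactorial (ν i - i + j)).det

theorem invFactorialDet_eq (d : ℕ) (ν : ℕ → ℕ) :
    invFactorialDet d ν =
      (∏ i ∈ Finset.range d, ((ν (d - 1 - i) + i).factorial : ℚ))⁻¹ *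
        ∏ j ∈ Finset.range d, ∏ i ∈ Finset.range j,
          (((ν (d - 1 - j) + j : ℕ) : ℚ) - (ν (d - 1 - i) + i : ℕ)) := by
  rw [← det_invFactorial_sub fun i => ν (d - 1 - i) + i, invFactorialDet,
    ← Matrix.det_submatrix_equiv_self Fin.revPerm]
  congr 1
  ext i j
  simp only [Matrix.submatrix_apply, Matrix.of_apply, Fin.revPerm_apply, Fin.val_rev]
  rw [show d - 1 - (i : ℕ) = d - (i + 1) by omega]
  congr 1
  omega

theorem invFactorialDet_succ {d : ℕ} {ν : ℕ → ℕ} (h : ν d = 0) :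
    invFactorialDet (d + 1) ν = invFactorialDet d ν := by
  rw [invFactorialDet, Matrix.det_succ_row _ (Fin.last d), Fin.sum_univ_castSucc,
    Finset.sum_eq_zero fun j _ => ?_]
  · simp [h, invFactorial, invFactorialDet, Matrix.submatrix, Fin.succAbove_last, ← two_mul]
  · rw [Matrix.of_apply, invFactorial_of_neg, mul_zero, zero_mul]
    have := j.isLt
    simp only [Fin.val_last, h, Fin.val_castSucc]
    omega

theorem invFactorialDet_of_le {d e : ℕ} (hde : d ≤ e) {ν : ℕ → ℕ}
    (h : ∀ a, d ≤ a → ν a = 0) : invFactorialDet e ν = invFactorialDet d ν := by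
  induction e, hde using Nat.le_induction with
  | base => rfl
  | succ e hde ih =>
    rw [invFactorialDet_succ (h e hde), ih]

theorem invFactorialDet_zero (d : ℕ) : invFactorialDet d 0 = 1 := by
  rw [invFactorialDet_of_le (ν := 0) d.zero_le fun _ _ => rfl, invFactorialDet,
    Matrix.det_isEmpty]

end InvFactorialDet

section Schur

theorem toDiff_eq_aeval (f : MvPolynomial ℕ ℚ) :
    toDiff f = aeval (bracket (X 0) - bracket (X 1)) f := by
  simp only [toDiff, smul_sub]
  rfl

variable {d k : ℕ} {ν : ℕ → ℕ} {A : Type*} [CommRing A] [Algebra ℚ A]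

theorem aeval_iterate_pderiv_schur (x y : A) (hν : ∀ a < d, ν a < k + a) :
    aeval (bracket x - bracket y) ((pderiv 1)^[∑ a ∈ Finset.range d, ν a]
        (schur (Matrix.vecCons k fun a : Fin d => ν a + 1))) =
      ((∑ a ∈ Finset.range d, ν a).factorial * invFactorialDet d ν) •
        (aeval (bracket x - bracket y) (pz k) * (-y) ^ d) := by
  set N := ∑ a ∈ Finset.range d, ν a with hN
  set m : Fin (d + 1) → ℤ :=
    fun a => (Matrix.vecCons k (fun a : Fin d => ν a + 1) a : ℕ) - (a : ℕ) with hm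
  have hm_zero : m 0 = k := by simp [hm]
  have hm_succ (a : Fin d) : m a.succ = ν a - a := by
    simp only [hm, Matrix.cons_val_succ, Fin.val_succ]
    omega
  have hm_lt (a : Fin d) : m a.succ < m 0 := by
    have := hν a a.isLt
    rw [hm_succ, hm_zero]
    omega
  have hm_sum : ∑ a : Fin d, (m a.succ + a) = N := by
    simp only [hm_succ, sub_add_cancel]
    rw [hN, Nat.cast_sum, Fin.sum_univ_eq_sum_range fun a => (ν a : ℤ)]
  have hdet : shiftHom 1 (bracket x - bracket y)
      (schur (Matrix.vecCons k fun a : Fin d => ν a + 1)) =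
        Polynomial.X ^ N * (lowestMatrix x y m).det := by
    rw [← det_shiftHom_pz_eq_X_pow_mul x y hm_lt hm_sum, schur, AlgHom.map_det]
    rfl
  have hcoeff := coeff_zero_det_lowestMatrix x y hm_lt
  simp only [hm_succ, hm_zero] at hcoeff
  rw [← invFactorialDet] at hcoeff
  rw [aeval_iterate_pderiv, hdet, Polynomial.coeff_X_pow_mul', if_pos le_rfl, Nat.sub_self, hcoeff,
    ← Nat.cast_smul_eq_nsmul ℚ, mul_smul, Algebra.smul_def (invFactorialDet d ν)]
  congr 1
  ring

theorem aeval_schur_hook (x y : A) (hk : ∀ a < d, 0 < k + a) :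
    aeval (bracket x - bracket y) (schur (Matrix.vecCons k fun _ : Fin d => 1)) =
      aeval (bracket x - bracket y) (pz k) * (-y) ^ d := by
  simpa [invFactorialDet_zero] using
    aeval_iterate_pderiv_schur (d := d) (k := k) (ν := 0) x y hk

theorem toDiff_derivs_schur (hν : ∀ a < d, ν a < k + a) :
    toDiff (derivs (List.replicate (∑ a ∈ Finset.range d, ν a) 1)
        (schur (Matrix.vecCons k fun a : Fin d => ν a + 1))) =
      ((∑ a ∈ Finset.range d, ν a).factorial * invFactorialDet d ν) •
        toDiff (schur (Matrix.vecCons k fun _ : Fin d => 1)) := by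
  rw [toDiff_eq_aeval, toDiff_eq_aeval, derivs_replicate, aeval_iterate_pderiv_schur _ _ hν,
    aeval_schur_hook _ _ fun a ha => (hν a ha).pos]

end Schur

section Pad

theorem pad_of_le {l : ℕ} (lam : Fin l → ℕ) {a : ℕ} (ha : l ≤ a) : pad lam a = 0 :=
  dif_neg ha.not_gt

theorem pad_val {l : ℕ} (lam : Fin l → ℕ) (i : Fin l) : pad lam i = lam i :=
  dif_pos i.isLt

theorem one_le_pad {l : ℕ} {lam : Fin l → ℕ} (hlam : ∀ i, 1 ≤ lam i) {a : ℕ} (ha : a < l) :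
    1 ≤ pad lam a :=
  (hlam ⟨a, ha⟩).trans_eq (pad_val lam ⟨a, ha⟩).symm

theorem pad_lt_pad_zero_add {l : ℕ} {lam : Fin l → ℕ} (hlam : Antitone lam) {a : ℕ} (ha : 1 ≤ a)
    (hal : a < l) : pad lam a < pad lam 0 + a := by
  have hle : pad lam a ≤ pad lam 0 := by
    rw [pad, dif_pos hal, pad, dif_pos (by omega)]
    exact hlam (Fin.mk_le_mk.mpr a.zero_le)
  omega

theorem eq_vecCons_of_pad {d : ℕ} {mu : Fin (d + 1) → ℕ} {f : ℕ → ℕ}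
    (hf : ∀ a < d, pad mu (a + 1) = f a) :
    mu = Matrix.vecCons (pad mu 0) fun a : Fin d => f a := by
  funext i
  cases i using Fin.cases with
  | zero => exact (pad_val mu 0).symm
  | succ a => rw [Matrix.cons_val_succ, ← hf a a.isLt, ← pad_val mu a.succ, Fin.val_succ]

theorem sum_Ico_sub_eq_sum_range {p ν : ℕ → ℕ} {n : ℕ} (hp : ∀ a < n, p (a + 1) = ν a + 1) :
    (∑ a ∈ Finset.Ico 1 (n + 1), p a) - n = ∑ a ∈ Finset.range n, ν a := by
  have hsum : ∑ a ∈ Finset.Ico 1 (n + 1), p a = ∑ a ∈ Finset.range n, ν a + n := by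
    rw [Finset.sum_Ico_eq_sum_range, Nat.add_sub_cancel,
      Finset.sum_congr rfl fun a ha => by rw [add_comm, hp a (Finset.mem_range.mp ha)],
      Finset.sum_add_distrib, Finset.sum_const, Finset.card_range, smul_eq_mul, mul_one]
  rw [hsum, Nat.add_sub_cancel]

theorem invFactorialDet_eq_of_succ {p ν : ℕ → ℕ} {n : ℕ} (hp : ∀ a < n, p (a + 1) = ν a + 1) :
    invFactorialDet n ν =
      (∏ i ∈ Finset.range n, ((p (n - i) + i - 1).factorial : ℚ))⁻¹ *
        ∏ j ∈ Finset.range n, ∏ i ∈ Finset.range j,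
          (((p (n - j) + j : ℕ) : ℚ) - (p (n - i) + i : ℕ)) := by
  have hw {i : ℕ} (hi : i < n) : p (n - i) + i = ν (n - 1 - i) + i + 1 := by
    rw [show n - i = n - 1 - i + 1 by omega, hp _ (by omega)]
    omega
  rw [invFactorialDet_eq]
  congr 1
  · refine congrArg _ (Finset.prod_congr rfl fun i hi => ?_)
    rw [hw (Finset.mem_range.mp hi), Nat.add_sub_cancel]
  · refine Finset.prod_congr rfl fun j hj => Finset.prod_congr rfl fun i hi => ?_
    rw [Finset.mem_range] at hi hj
    rw [hw hj, hw (hi.trans hj), Nat.cast_succ (_ + j), Nat.cast_succ (_ + i),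
      add_sub_add_right_eq_sub]

end Pad

theorem statement15_general (l : ℕ) (hl : 1 ≤ l) (lam : Fin l → ℕ)
    (l' : ℕ) (hll' : l ≤ l') (mu : Fin l' → ℕ)
    (hfirst : ∀ a : ℕ, 1 ≤ a → a < l' → pad mu a < pad mu 0 + a) (hmupos : ∀ i, 1 ≤ mu i)
    (hmid : ∀ a : ℕ, 1 ≤ a → a < l → pad mu a = pad lam a)
    (htail : ∀ a : ℕ, l ≤ a → a < l' → pad mu a = 1)
    (N' : ℕ) (hN' : N' = (∑ a ∈ Finset.Ico 1 l, pad lam a) - (l - 1))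
    (c : ℚ)
    (hc : c = (Nat.factorial N' : ℚ)
          / (∏ i ∈ Finset.range (l - 1), (Nat.factorial (pad lam (l - 1 - i) + i - 1) : ℚ))
        * ∏ j ∈ Finset.range (l - 1), ∏ i ∈ Finset.range j,
            (((pad lam (l - 1 - j) + j : ℕ) : ℚ) - ((pad lam (l - 1 - i) + i : ℕ) : ℚ))) :
    toDiff (derivs (List.replicate N' 1) (schur mu))
      = c • toDiff (schur (fun a : Fin l' => if (a : ℕ) = 0 then pad mu 0 else 1)) := by
  obtain ⟨n, rfl⟩ : ∃ n, l = n + 1 := ⟨l - 1, by omega⟩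
  obtain ⟨d, rfl⟩ : ∃ d, l' = d + 1 := ⟨l' - 1, by omega⟩
  obtain ⟨ν, hν⟩ : ∃ ν : ℕ → ℕ, ∀ a, ν a = pad lam (a + 1) - 1 := ⟨_, fun _ => rfl⟩
  have hν_zero (a : ℕ) (ha : n ≤ a) : ν a = 0 := by rw [hν, pad_of_le lam (by omega)]
  have hlam (a : ℕ) (ha : a < n) : pad lam (a + 1) = ν a + 1 := by
    have := one_le_pad hmupos (show a + 1 < d + 1 by omega)
    have := hmid (a + 1) (by omega) (by omega)
    have := hν a
    omega
  have hmu (a : ℕ) (ha : a < d) : pad mu (a + 1) = ν a + 1 := by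
    rcases lt_or_ge a n with han | hna
    · rw [hmid _ (by omega) (by omega), hlam a han]
    · rw [htail _ (by omega) (by omega), hν_zero a hna]
  have hN : N' = ∑ a ∈ Finset.range d, ν a := by
    rw [hN', Nat.add_sub_cancel, sum_Ico_sub_eq_sum_range hlam,
      Finset.eventually_constant_sum hν_zero (show n ≤ d by omega)]
  have hc' : c = N'.factorial * invFactorialDet d ν := by
    rw [hc, invFactorialDet_of_le (by omega) hν_zero, invFactorialDet_eq_of_succ hlam,
      Nat.add_sub_cancel, div_eq_mul_inv, mul_assoc]
  have hhook : (fun a : Fin (d + 1) => if (a : ℕ) = 0 then pad mu 0 else 1) =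
      Matrix.vecCons (pad mu 0) fun _ => 1 := by
    ext a
    cases a using Fin.cases <;> simp
  rw [hc', hN, hhook, ← toDiff_derivs_schur, ← eq_vecCons_of_pad hmu]
  intro a ha
  have := hfirst (a + 1) (by omega) (by omega)
  have := hmu a ha
  omega

/-- Let `λ` be a partition of length `l`,
`N'_{λ,1} = λ_2+⋯+λ_l - (l-1)`, and `μ` a partition of length `l' ≥ l` with `μ_i = λ_i` for
`2 ≤ i ≤ l` and `μ_i = 1` for `l < i ≤ l'`. Then `∂_1^{N'_{λ,1}} s_μ` at `t = [x_1]-[x_2]`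
equals `c_λ · s_{(μ_1,1^{l'-1})}([x_1]-[x_2])`, where
`c_λ = (N'_{λ,1}! / Π_{i=1}^{l-1} (w_i-1)!) · Π_{1≤i<j≤l-1} (w_j - w_i)` and
`(w_l,...,w_1) = (λ_1,...,λ_l) + (l-1,...,1,0)`. -/
theorem statement15 (l : ℕ) (hl : 1 ≤ l) (lam : Fin l → ℕ)
    (hanti : Antitone lam) (hpos : ∀ i, 1 ≤ lam i)
    (l' : ℕ) (hll' : l ≤ l') (mu : Fin l' → ℕ)
    (hmuanti : Antitone mu) (hmupos : ∀ i, 1 ≤ mu i)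
    (hmid : ∀ a : ℕ, 1 ≤ a → a < l → pad mu a = pad lam a)
    (htail : ∀ a : ℕ, l ≤ a → a < l' → pad mu a = 1)
    (N' : ℕ) (hN' : N' = (∑ a ∈ Finset.Ico 1 l, pad lam a) - (l - 1))
    (c : ℚ)
    (hc : c = (Nat.factorial N' : ℚ)
          / (∏ i ∈ Finset.range (l - 1), (Nat.factorial (pad lam (l - 1 - i) + i - 1) : ℚ))
        * ∏ j ∈ Finset.range (l - 1), ∏ i ∈ Finset.range j,
            (((pad lam (l - 1 - j) + j : ℕ) : ℚ) - ((pad lam (l - 1 - i) + i : ℕ) : ℚ))) :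
    toDiff (derivs (List.replicate N' 1) (schur mu))
      = c • toDiff (schur (fun a : Fin l' => if (a : ℕ) = 0 then pad mu 0 else 1)) := by
  have hfirst (a : ℕ) (ha : 1 ≤ a) (hal : a < l') : pad mu a < pad mu 0 + a :=
    pad_lt_pad_zero_add hmuanti ha hal
  exact statement15_general l hl lam l' hll' mu hfirst hmupos hmid htail N' hN' c hc
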